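/- Let Φ₁₀ : [0,π] → ℝ be defined by Φ₁₀(x) := (4/π) Σ_{k=1}^∞ [2k(4k² − 13)/(1 − 4k²)³] sin(2kx). Then (2/π) ∫₀^π ( Φ₁₀'(x) − (π/2 − x) cos(x) − 3(π − 2x) Φ₁₀(x) + (3/4)(π² − 12πx + 12x²) sin(x) ) sin(x) dx = −16. -/

import Mathlib

open Set Real

noncomputable section

/-- The `k`-th Fourier coefficient in the series defining `Φ₁₀`. -/
def phiCoeff (k : ℕ) : ℝ := 2 * (k:ℝ) * (4 * (k:ℝ)^2 - 13) / (1 - 4 * (k:ℝ)^2)^3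

/-- `Φ₁₀(x) = (4/π) Σ_{k=1}^∞ [2k(4k²−13)/(1−4k²)³] sin(2kx)`. -/
def Phi10 (x : ℝ) : ℝ :=
  (4/π) * ∑' k : ℕ, phiCoeff (k + 1) * Real.sin (2 * ((k:ℝ) + 1) * x)

/-- Closed form of `Φ₁₀` on `[0,π]`. -/
def closedF (x : ℝ) : ℝ := 3/2 * x * (π - x) * Real.cos x - (π - 2 * x) * Real.sin x

/-- Coefficient as a function on the integers. -/
def gz (n : ℤ) : ℝ := 2 * (n:ℝ) * (4 * (n:ℝ)^2 - 13) / (1 - 4 * (n:ℝ)^2)^3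

lemma denom_ne (n : ℤ) : (1 - 4 * (n:ℝ)^2) ≠ 0 := by
  intro h
  have h2 : (1 - 4 * n^2 : ℤ) = 0 := by exact_mod_cast h
  omega

lemma summable_gz : Summable gz := by
  have h := Real.summable_one_div_int_pow (p := 2) |>.mpr (by norm_num)
  refine Summable.of_norm_bounded h (fun n => ?_)
  rcases eq_or_ne n 0 with rfl | hn
  · simp [gz]
  have h1 : (1:ℝ) ≤ |(n:ℝ)| := by
    have := Int.one_le_abs hn
    exact_mod_cast this
  have hsq : (n:ℝ)^2 = |(n:ℝ)|^2 := (sq_abs _).symm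
  rw [gz, Real.norm_eq_abs, abs_div, abs_mul, abs_mul, abs_pow, abs_two, hsq]
  set a := |(n:ℝ)|
  have ha2 : 1 ≤ a^2 := by nlinarith
  have hden : 3 * a^2 ≤ |1 - 4 * a^2| := by
    rw [abs_of_nonpos (by linarith)]; linarith
  have hnum : |4 * a^2 - 13| ≤ 13 * a^2 := by
    rw [abs_le]; constructor <;> linarith
  have hden3 : (3 * a^2)^3 ≤ |1 - 4 * a^2|^3 := by gcongr
  rw [div_le_div_iff₀ (by nlinarith [pow_pos (by positivity : (0:ℝ) < 3 * a^2) 3]) (by positivity)]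
  calc 2 * a * |4 * a^2 - 13| * a^2 ≤ 2 * a^2 * (13 * a^2) * a^2 := by
        gcongr
        nlinarith
    _ ≤ (3 * a^2)^3 := by
        have : 0 ≤ (a^2)^3 := by positivity
        nlinarith
    _ ≤ 1 * |1 - 4 * a^2|^3 := by linarith

/-- Antiderivative computation, in terms of a complex frequency. -/
lemma integral_closedF (l : ℂ) (hD : l^2 + 1 ≠ 0) (hl : Complex.exp (l * π) = 1) :
    ∫ x in (0:ℝ)..π, Complex.exp (l * x) * (closedF x : ℂ) =
      -2 * l * (l^2 + 13) / (l^2 + 1)^3 := by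
  obtain ⟨D, hDd⟩ : ∃ D, D = l^2 + 1 := ⟨_, rfl⟩
  rw [← hDd] at hD ⊢
  obtain ⟨p, hp⟩ : ∃ p : ℂ, p = (π : ℂ) := ⟨_, rfl⟩
  obtain ⟨b2, hb2⟩ : ∃ b : ℂ, b = -3 / (2 * D) := ⟨_, rfl⟩
  obtain ⟨a2, ha2⟩ : ∃ b : ℂ, b = l * b2 := ⟨_, rfl⟩
  obtain ⟨b1, hb1⟩ : ∃ b : ℂ, b = ((3 * p / 2 - 2 * a2) + l * (2 - 2 * b2)) / D := ⟨_, rfl⟩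
  obtain ⟨a1, ha1⟩ : ∃ b : ℂ, b = (l * (3 * p / 2 - 2 * a2) - (2 - 2 * b2)) / D := ⟨_, rfl⟩
  obtain ⟨b0, hb0⟩ : ∃ b : ℂ, b = (-a1 + l * (-p - b1)) / D := ⟨_, rfl⟩
  obtain ⟨a0, ha0⟩ : ∃ b : ℂ, b = (l * (-a1) - (-p - b1)) / D := ⟨_, rfl⟩
  have e1 : l * a2 + b2 = -3/2 := by
    rw [ha2, hb2]; field_simp; rw [hDd]; ring
  have e2 : -a2 + l * b2 = 0 := by rw [ha2]; ring
  have e3 : l * a1 + b1 = 3 * p / 2 - 2 * a2 := by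
    rw [ha1, hb1]; field_simp; rw [hDd]; ring
  have e4 : -a1 + l * b1 = 2 - 2 * b2 := by
    rw [ha1, hb1]; field_simp; rw [hDd]; ring
  have e5 : l * a0 + b0 = -a1 := by
    rw [ha0, hb0]; field_simp; rw [hDd]; ring
  have e6 : -a0 + l * b0 = -p - b1 := by
    rw [ha0, hb0]; field_simp; rw [hDd]; ring
  have hder : ∀ x : ℝ, HasDerivAt (fun x : ℝ => Complex.exp (l * x) *
      ((a0 + a1 * x + a2 * (x:ℂ)^2) * (Real.cos x : ℂ)
        + (b0 + b1 * x + b2 * (x:ℂ)^2) * (Real.sin x : ℂ)))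
      (Complex.exp (l * x) * (closedF x : ℂ)) x := by
    intro x
    have hx : HasDerivAt (fun x : ℝ => (x:ℂ)) 1 x := by
      simpa using (hasDerivAt_id x).ofReal_comp
    have hE : HasDerivAt (fun x : ℝ => Complex.exp (l * x)) (Complex.exp (l * x) * (l * 1)) x :=
      (hx.const_mul l).cexp
    have hc := (Real.hasDerivAt_cos x).ofReal_comp
    have hs := (Real.hasDerivAt_sin x).ofReal_comp
    have hA := ((hx.const_mul a1).const_add a0).add ((hx.pow 2).const_mul a2)
    have hB := ((hx.const_mul b1).const_add b0).add ((hx.pow 2).const_mul b2)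
    have := hE.mul ((hA.mul hc).add (hB.mul hs))
    refine this.congr_deriv ?_
    simp only [closedF, Pi.add_apply, Pi.mul_apply, Pi.pow_apply]
    push_cast
    rw [← hp]
    linear_combination (Complex.exp (l * x)) * (
      Complex.cos x * (e1 * (x:ℂ)^2 + e3 * x + e5) + Complex.sin x * (e2 * (x:ℂ)^2 + e4 * x + e6))
  rw [intervalIntegral.integral_eq_sub_of_hasDerivAt (fun x _ => hder x)]
  · rw [hl]
    simp only [Real.cos_pi, Real.sin_pi, Real.cos_zero, Real.sin_zero, ← hp]
    simp only [Complex.ofReal_zero, Complex.ofReal_neg, Complex.ofReal_one, mul_zero,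
      Complex.exp_zero]
    rw [ha0, ha1, hb1, ha2, hb2]
    field_simp
    rw [hDd]
    ring
  · apply Continuous.intervalIntegrable
    unfold closedF
    fun_prop

instance factPi : Fact (0 < π) := ⟨Real.pi_pos⟩

lemma fc_eq (n : ℤ) :
    fourierCoeff (AddCircle.liftIco π 0 (fun x => (closedF x : ℂ))) n =
      -(2 * Complex.I / π) * (gz n : ℂ) := by
  have hpi : (π:ℂ) ≠ 0 := by exact_mod_cast Real.pi_ne_zero
  rw [fourierCoeff_eq_intervalIntegral _ _ 0]
  have hI : ∫ x in (0:ℝ)..0 + π, @fourier π (-n) x •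
        AddCircle.liftIco π 0 (fun x => (closedF x : ℂ)) x
      = ∫ x in (0:ℝ)..π, Complex.exp ((-2 * Complex.I * n) * x) * (closedF x : ℂ) := by
    rw [zero_add]
    refine intervalIntegral.integral_congr_Ioo_of_le Real.pi_pos.le fun x hx => ?_
    rw [AddCircle.liftIco_coe_apply (by simpa using Ioo_subset_Ico_self hx), fourier_coe_apply,
      smul_eq_mul]
    congr 2
    push_cast
    field_simp
  have hsq : (-2 * Complex.I * (n:ℂ))^2 = -4 * (n:ℂ)^2 := by
    rw [mul_pow, mul_pow, Complex.I_sq]; ring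
  have hD : (1 - 4 * (n:ℂ)^2) ≠ 0 := by exact_mod_cast denom_ne n
  have hD' : (-2 * Complex.I * (n:ℂ))^2 + 1 = 1 - 4 * (n:ℂ)^2 := by rw [hsq]; ring
  rw [hI, integral_closedF, hD', hsq]
  · rw [gz, Complex.real_smul]
    push_cast
    field_simp
    ring
  · rw [hD']; exact hD
  · rw [Complex.exp_eq_one_iff]
    exact ⟨-n, by push_cast; ring⟩

lemma Phi10_eq {x : ℝ} (hx : x ∈ Ico 0 π) : Phi10 x = closedF x := by
  have hpi : (π:ℂ) ≠ 0 := by exact_mod_cast Real.pi_ne_zero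
  let B : C(AddCircle π, ℂ) :=
    ContinuousMap.mk (AddCircle.liftIco π 0 (fun x => (closedF x : ℂ)))
      (AddCircle.liftIco_zero_continuous (by simp [closedF])
        (by unfold closedF; fun_prop))
  have step1 : ∀ n : ℤ, fourierCoeff B n = -(2 * Complex.I / π) * (gz n : ℂ) := fc_eq
  have hsum : Summable (fourierCoeff B) := by
    have : Summable (fun n : ℤ => -(2 * Complex.I / π) * (gz n : ℂ)) :=
      (Complex.ofRealCLM.summable summable_gz).mul_left _
    exact this.congr fun n => (step1 n).symm
  have step2 := has_pointwise_sum_fourier_series_of_summable hsum (x : AddCircle π)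
  have hBx : B (x : AddCircle π) = (closedF x : ℂ) := by
    change AddCircle.liftIco π 0 (fun x => (closedF x : ℂ)) (x : AddCircle π) = _
    rw [AddCircle.liftIco_coe_apply (by simpa using hx)]
  rw [hBx] at step2
  simp_rw [step1] at step2
  have step3 := step2.nat_add_neg
  have h0 : gz 0 = 0 := by simp [gz]
  rw [h0] at step3
  simp only [Complex.ofReal_zero, mul_zero, zero_smul, add_zero] at step3
  have step4 : HasSum (fun n : ℕ => (4/π) * (phiCoeff n * Real.sin (2 * (n:ℝ) * x)))
      (closedF x) := by
    rw [← Complex.hasSum_ofReal]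
    convert! step3 using 2 with n
    have hneg : gz (-(n:ℤ)) = - gz n := by simp only [gz]; push_cast; ring
    have hpos : gz (n:ℤ) = phiCoeff n := by simp only [gz, phiCoeff]; push_cast; ring
    rw [hneg, hpos, fourier_coe_apply, fourier_coe_apply]
    have ea : 2 * (π:ℂ) * Complex.I * ((n:ℤ):ℂ) * x / π = (2 * n * x : ℂ) * Complex.I := by
      push_cast; field_simp
    have eb : 2 * (π:ℂ) * Complex.I * ((-(n:ℤ) : ℤ):ℂ) * x / π
        = -(2 * n * x : ℂ) * Complex.I := by
      push_cast; field_simp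
    rw [ea, eb, Complex.exp_mul_I, Complex.exp_mul_I, Complex.cos_neg, Complex.sin_neg]
    push_cast
    simp only [smul_eq_mul]
    linear_combination (4 / π * phiCoeff n * Complex.sin (2 * n * x)) * Complex.I_sq
  have step5 := (hasSum_nat_add_iff' 1).mpr step4
  simp only [Finset.sum_range_one, Nat.cast_zero, mul_zero, zero_mul, Real.sin_zero,
    sub_zero] at step5
  rw [Phi10, ← tsum_mul_left, ← step5.tsum_eq]
  push_cast
  rfl

lemma hasDerivAt_closedF (x : ℝ) : HasDerivAt closedF
    (1/2 * (π - 2*x) * Real.cos x - 3/2 * x * (π - x) * Real.sin x + 2 * Real.sin x) x := by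
  have hx := hasDerivAt_id' x
  have := (((hx.const_mul (3/2)).mul (hx.const_sub π)).mul (Real.hasDerivAt_cos x)).sub
    (((hx.const_mul 2).const_sub π).mul (Real.hasDerivAt_sin x))
  refine this.congr_deriv ?_
  simp only [Pi.mul_apply]
  ring

/-- The second-order Taylor coefficient `Λ₂₀` of the Dirichlet
eigenvalue branch equals `−16`. -/
theorem Lambda20_eq_neg_sixteen :
    (2/π) * ∫ x in (0:ℝ)..π,
        (deriv Phi10 x - (π/2 - x) * Real.cos x - 3 * (π - 2*x) * Phi10 x
          + (3/4) * (π^2 - 12*π*x + 12*x^2) * Real.sin x) * Real.sin x = -16 := by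
  have hcongr : ∫ x in (0:ℝ)..π,
        (deriv Phi10 x - (π/2 - x) * Real.cos x - 3 * (π - 2*x) * Phi10 x
          + (3/4) * (π^2 - 12*π*x + 12*x^2) * Real.sin x) * Real.sin x
      = ∫ x in (0:ℝ)..π, ((2 + 15/4*π^2 - 45/2*π*x + 45/2*x^2) * Real.sin x ^ 2
          - 9/2 * (π - 2*x) * x * (π - x) * (Real.sin x * Real.cos x)) := by
    refine intervalIntegral.integral_congr_Ioo_of_le Real.pi_pos.le fun x hx => ?_
    have hd : deriv Phi10 x = deriv closedF x := by
      apply Filter.EventuallyEq.deriv_eq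
      filter_upwards [Ioo_mem_nhds hx.1 hx.2] with y hy
      exact Phi10_eq (Ioo_subset_Ico_self hy)
    rw [hd, Phi10_eq (Ioo_subset_Ico_self hx), (hasDerivAt_closedF x).deriv, closedF]
    ring
  rw [hcongr]
  have hder : ∀ x : ℝ, HasDerivAt (fun x : ℝ =>
      (x + 15/8*π^2*x - 45/8*π*x^2 + 15/4*x^3)
      + (-1/2) * ((1 + 15/8*π^2 - 45/4*π*x + 45/4*x^2) * Real.sin (2*x)
          + (-45/8*π + 45/4*x) * Real.cos (2*x) - 45/8 * Real.sin (2*x))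
      + 9/8 * ((π^2*x - 3*π*x^2 + 2*x^3) * Real.cos (2*x)
          - 1/2 * (π^2 - 6*π*x + 6*x^2) * Real.sin (2*x)
          - 1/4 * (-6*π + 12*x) * Real.cos (2*x) + 1/8 * 12 * Real.sin (2*x)))
      ((2 + 15/4*π^2 - 45/2*π*x + 45/2*x^2) * Real.sin x ^ 2
          - 9/2 * (π - 2*x) * x * (π - x) * (Real.sin x * Real.cos x)) x := by
    intro x
    have hx := hasDerivAt_id' x
    have hc : HasDerivAt (fun x : ℝ => Real.cos (2*x)) (-Real.sin (2*x) * (2*1)) x :=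
      (hx.const_mul 2).cos
    have hs : HasDerivAt (fun x : ℝ => Real.sin (2*x)) (Real.cos (2*x) * (2*1)) x :=
      (hx.const_mul 2).sin
    have h2 : HasDerivAt (fun x : ℝ => x^2) (2*x) x := by simpa using hasDerivAt_pow 2 x
    have h3 : HasDerivAt (fun x : ℝ => x^3) (3*x^2) x := by simpa using hasDerivAt_pow 3 x
    have t1 := (((hx.add (hx.const_mul (15/8*π^2))).sub (h2.const_mul (45/8*π))).add
      (h3.const_mul (15/4)))
    have q0 := (((hx.const_mul (45/4*π)).const_sub (1 + 15/8*π^2)).add (h2.const_mul (45/4)))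
    have q1 := (hx.const_mul (45/4)).const_add (-45/8*π)
    have t2 := (((q0.mul hs).add (q1.mul hc)).sub (hs.const_mul (45/8))).const_mul (-1/2)
    have p0 := ((hx.const_mul (π^2)).sub (h2.const_mul (3*π))).add (h3.const_mul 2)
    have p1 := (((hx.const_mul (6*π)).const_sub (π^2)).add (h2.const_mul 6)).const_mul (1/2)
    have p2 := ((hx.const_mul 12).const_add (-6*π)).const_mul (1/4)
    have t3 := ((((p0.mul hc).sub (p1.mul hs)).sub (p2.mul hc)).add
      (hs.const_mul (1/8*12))).const_mul (9/8)
    refine ((t1.add t2).add t3).congr_deriv ?_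
    simp only [Pi.add_apply, Pi.sub_apply, Pi.mul_apply]
    rw [Real.sin_two_mul, Real.cos_two_mul, Real.cos_sq']
    ring
  rw [intervalIntegral.integral_eq_sub_of_hasDerivAt (fun x _ => hder x)]
  · simp only [Real.cos_two_pi, Real.sin_two_pi, mul_zero, Real.cos_zero, Real.sin_zero]
    field_simp
    ring
  · apply Continuous.intervalIntegrable
    fun_prop

end
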